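/- Let μ be a probability measure on ℝ^d, let C be a nonempty finite collection of measurable subsets of ℝ^d with union c = ⋃_{r∈C} r and minimal redundancy m(C) ≥ 1, and let h : ℝ^d → ℝ be bounded measurable. Then Σ_{A ∈ P(C), A ⊆ c, μ(A) > 0} ∫_A ( h − E_μ[h | A] )² dμ ≤ (1 / m(C)) Σ_{r ∈ C, μ(r) > 0} ∫_r ( h − E_μ[h | r] )² dμ, where E_μ[h | S] := (∫_S h dμ)/μ(S). -/

import Mathlib

/-!
Write `V(A) = ∫_A (h - E[h|A])²`. A cell `A ⊆ c` of the generated partition is contained in every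
element of `C` that it meets, so it lies in at least `m(C)` elements `r`, all of positive measure
when `μ A > 0`. Since the conditional mean minimizes `v ↦ ∫_A (h - v)²`
(`integral_sq_sub_condMeanOn_le`), summing over these `r` gives
`m(C) V(A) ≤ Σ_{r ⊇ A} ∫_A (h - E[h|r])²` (`minRedund_mul_le`). After summing over `A` and
exchanging the sums, the cells inside a fixed `r` are disjoint subsets of `r`, so their contributions
add up to at most `∫_r (h - E[h|r])²` (`sum_integral_cells_le`).
-/

open Set MeasureTheory

attribute [local instance] Classical.propDecidable

/-- The activation function: `activ C x` is the set of elements of the collection `C`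
containing `x`. -/
noncomputable def activ {α : Type*} (C : Finset (Set α)) (x : α) : Finset (Set α) :=
  C.filter (fun r => x ∈ r)

/-- The partition generated from the collection `C`:
`P(C) = φ_C⁻¹(Im φ_C)`, i.e. the collection of the (nonempty) preimages
`φ_C⁻¹({S})` for `S` in the image of the activation function `φ_C`. -/
noncomputable def genPart {α : Type*} (C : Finset (Set α)) : Set (Set α) :=
  { A | ∃ x : α, A = { y | activ C y = activ C x } }

/-- The minimal redundancy `m(C) = min_{x ∈ ⋃ C} #φ_C(x)` of the collection `C`. -/
noncomputable def minRedund {α : Type*} (C : Finset (Set α)) : ℕ :=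
  sInf ((fun x => (activ C x).card) '' (⋃ r ∈ C, (r : Set α)))

/-- Conditional mean of `h` given the set `S`, under the measure `μ`:
`E_μ[h | S] = (∫_S h dμ)/μ(S)`. -/
noncomputable def condMeanOn {α : Type*} [MeasurableSpace α] (μ : Measure α)
    (h : α → ℝ) (S : Set α) : ℝ :=
  (∫ x in S, h x ∂μ) / (μ S).toReal

lemma activ_eq_iff {α : Type*} {C : Finset (Set α)} {x y : α} :
    activ C y = activ C x ↔ ∀ r ∈ C, (y ∈ r ↔ x ∈ r) := by
  simp only [activ, Finset.ext_iff, Finset.mem_filter]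
  exact ⟨fun H r hr => by simpa [hr] using H r, fun H r => and_congr_right (H r)⟩

lemma genPart_finite {α : Type*} (C : Finset (Set α)) : (genPart C).Finite := by
  refine (C.powerset.finite_toSet.image (fun S => {y | activ C y = S})).subset ?_
  rintro A ⟨x, rfl⟩
  exact ⟨activ C x, Finset.mem_coe.2 (Finset.mem_powerset.2 (Finset.filter_subset _ _)), rfl⟩

lemma genPart_disjoint {α : Type*} {C : Finset (Set α)} {A B : Set α}
    (hA : A ∈ genPart C) (hB : B ∈ genPart C) (hAB : A ≠ B) : Disjoint A B := by
  obtain ⟨x, rfl⟩ := hA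
  obtain ⟨y, rfl⟩ := hB
  refine Set.disjoint_left.2 fun z hz hz' => hAB ?_
  simp only [mem_ofPred_eq] at hz hz'
  rw [← hz, ← hz']

lemma genPart_measurableSet {α : Type*} [MeasurableSpace α] {C : Finset (Set α)}
    (hC : ∀ r ∈ C, MeasurableSet r) {A : Set α} (hA : A ∈ genPart C) : MeasurableSet A := by
  obtain ⟨x, rfl⟩ := hA
  have : {y | activ C y = activ C x} = ⋂ r ∈ C, {y | y ∈ r ↔ x ∈ r} := by
    ext y
    simp [activ_eq_iff]
  rw [this]
  refine Finset.measurableSet_biInter _ fun r hr => ?_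
  by_cases hx : x ∈ r
  · simpa [hx] using hC r hr
  · have heq : {y | y ∈ r ↔ x ∈ r} = rᶜ := by ext y; simp [hx]
    exact heq ▸ (hC r hr).compl

/-- A cell contained in the union of `C` lies inside at least `m(C)` elements of `C`. -/
lemma minRedund_le_card {α : Type*} {C : Finset (Set α)} {A : Set α}
    (hA : A ∈ genPart C) (hAc : A ⊆ ⋃ r ∈ C, r) :
    minRedund C ≤ (C.filter (fun r => A ⊆ r)).card := by
  obtain ⟨x, rfl⟩ := hA
  have hx : x ∈ ⋃ r ∈ C, r := hAc rfl
  have hle : minRedund C ≤ (activ C x).card := Nat.sInf_le (mem_image_of_mem _ hx)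
  refine hle.trans (Finset.card_le_card fun r hr => ?_)
  obtain ⟨hrC, hxr⟩ := Finset.mem_filter.1 hr
  exact Finset.mem_filter.2 ⟨hrC, fun y hy => (activ_eq_iff.1 hy r hrC).2 hxr⟩

section Integral

variable {α : Type*} [MeasurableSpace α] {μ : Measure α} [IsFiniteMeasure μ] {h : α → ℝ} {K : ℝ}

lemma integrable_sq_sub (hmeas : Measurable h) (hbdd : ∀ x, |h x| ≤ K) (v : ℝ) :
    Integrable (fun x => (h x - v) ^ 2) μ := by
  refine Integrable.of_bound (C := (K + |v|) ^ 2) (by fun_prop) (ae_of_all _ fun x => ?_)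
  rw [Real.norm_eq_abs, abs_pow]
  gcongr
  exact (abs_sub _ _).trans (by gcongr; exact hbdd x)

/-- The conditional mean minimizes the quadratic deviation, because
`∫_A (h - v)² = ∫_A (h - E[h|A])² + (E[h|A] - v)² μ(A)`. -/
lemma integral_sq_sub_condMeanOn_le (hmeas : Measurable h) (hbdd : ∀ x, |h x| ≤ K)
    {A : Set α} (hA : 0 < μ A) (v : ℝ) :
    ∫ x in A, (h x - condMeanOn μ h A) ^ 2 ∂μ ≤ ∫ x in A, (h x - v) ^ 2 ∂μ := by
  have hpos : 0 < (μ A).toReal := ENNReal.toReal_pos hA.ne' (measure_ne_top _ _)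
  set e := condMeanOn μ h A with he
  have hint : ∫ x in A, h x ∂μ = e * (μ A).toReal := by
    rw [he, condMeanOn, div_mul_cancel₀ _ hpos.ne']
  have hh : Integrable h (μ.restrict A) :=
    Integrable.of_bound (C := K) hmeas.aestronglyMeasurable (ae_of_all _ hbdd)
  have hexp : ∫ x in A, (h x - v) ^ 2 ∂μ
      = ∫ x in A, ((h x - e) ^ 2 + (2 * (e - v) * h x + (v ^ 2 - e ^ 2))) ∂μ := by
    congr 1
    ext x
    ring
  have h2 : Integrable (fun x => 2 * (e - v) * h x) (μ.restrict A) := hh.const_mul _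
  have hadd : Integrable (fun x => 2 * (e - v) * h x + (v ^ 2 - e ^ 2)) (μ.restrict A) :=
    h2.add (integrable_const _)
  rw [hexp, integral_add (integrable_sq_sub hmeas hbdd e) hadd,
    integral_add h2 (integrable_const _), integral_const_mul, hint, setIntegral_const,
    Measure.real, smul_eq_mul]
  nlinarith [mul_nonneg (sq_nonneg (e - v)) hpos.le]

lemma minRedund_mul_le (hmeas : Measurable h) (hbdd : ∀ x, |h x| ≤ K) {C : Finset (Set α)}
    {A : Set α} (hA : A ∈ genPart C) (hAc : A ⊆ ⋃ r ∈ C, r) (hpos : 0 < μ A) :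
    (minRedund C : ℝ) * ∫ x in A, (h x - condMeanOn μ h A) ^ 2 ∂μ ≤
      ∑ r ∈ C.filter (fun r => 0 < μ r) with A ⊆ r,
        ∫ x in A, (h x - condMeanOn μ h r) ^ 2 ∂μ := by
  have hfilter : (C.filter (fun r => 0 < μ r)).filter (fun r => A ⊆ r)
      = C.filter (fun r => A ⊆ r) := by
    ext r
    simp only [Finset.mem_filter]
    exact ⟨fun H => ⟨H.1.1, H.2⟩, fun H => ⟨⟨H.1, hpos.trans_le (measure_mono H.2)⟩, H.2⟩⟩
  rw [hfilter]
  calc (minRedund C : ℝ) * ∫ x in A, (h x - condMeanOn μ h A) ^ 2 ∂μ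
      ≤ ((C.filter (fun r => A ⊆ r)).card : ℝ) *
          ∫ x in A, (h x - condMeanOn μ h A) ^ 2 ∂μ := by
        refine mul_le_mul_of_nonneg_right ?_ (integral_nonneg fun x => sq_nonneg _)
        exact_mod_cast minRedund_le_card hA hAc
    _ = ∑ r ∈ C with A ⊆ r, ∫ x in A, (h x - condMeanOn μ h A) ^ 2 ∂μ := by simp
    _ ≤ _ := Finset.sum_le_sum fun r _ => integral_sq_sub_condMeanOn_le hmeas hbdd hpos _

end Integral

lemma sum_integral_cells_le {α : Type*} [MeasurableSpace α] {μ : Measure α}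
    {C : Finset (Set α)} (hC : ∀ r ∈ C, MeasurableSet r)
    {P : Finset (Set α)} (hP : ∀ A ∈ P, A ∈ genPart C) {r : Set α}
    {f : α → ℝ} (hf : Integrable f μ) (hf0 : ∀ x, 0 ≤ f x) :
    ∑ A ∈ P with A ⊆ r, ∫ x in A, f x ∂μ ≤ ∫ x in r, f x ∂μ := by
  rw [← integral_biUnion_finset (s := fun A => A) _
    (fun A hA => genPart_measurableSet hC (hP A (Finset.mem_filter.1 hA).1))
    (fun A hA B hB hAB => genPart_disjoint (hP A (Finset.mem_filter.1 hA).1)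
      (hP B (Finset.mem_filter.1 hB).1) hAB)
    (fun A _ => hf.integrableOn)]
  refine setIntegral_mono_set hf.integrableOn (ae_of_all _ hf0) (LE.le.eventuallyLE ?_)
  exact iUnion₂_subset fun A hA => (Finset.mem_filter.1 hA).2

/-- within-group upper bound. For a probability measure `μ`, a nonempty
finite collection `C` of measurable sets with union `c` and minimal redundancy
`m(C) ≥ 1`, and a bounded measurable `h`,
`Σ_{A ∈ P(C), A ⊆ c, μ(A)>0} ∫_A (h − E[h|A])² dμ
  ≤ (1/m(C)) Σ_{r ∈ C, μ(r)>0} ∫_r (h − E[h|r])² dμ`. -/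
theorem within_group_variance_upper_bound {d : ℕ}
    (μ : Measure (Fin d → ℝ)) [IsProbabilityMeasure μ]
    (C : Finset (Set (Fin d → ℝ))) (hC_ne : C.Nonempty)
    (hC_meas : ∀ r ∈ C, MeasurableSet r)
    (hm : 1 ≤ minRedund C)
    (h : (Fin d → ℝ) → ℝ) (hmeas : Measurable h)
    (K : ℝ) (hbdd : ∀ x, |h x| ≤ K) :
    ∑ᶠ A ∈ { A | A ∈ genPart C ∧ A ⊆ (⋃ r ∈ C, (r : Set (Fin d → ℝ))) ∧ 0 < μ A },
        ∫ x in A, (h x - condMeanOn μ h A) ^ 2 ∂μ ≤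
      (1 / (minRedund C : ℝ)) *
        ∑ᶠ r ∈ { r | r ∈ C ∧ 0 < μ r },
          ∫ x in r, (h x - condMeanOn μ h r) ^ 2 ∂μ := by
  have hfin : {A | A ∈ genPart C ∧ A ⊆ (⋃ r ∈ C, (r : Set (Fin d → ℝ))) ∧ 0 < μ A}.Finite :=
    (genPart_finite C).subset fun A hA => hA.1
  set R := C.filter (fun r => 0 < μ r) with hR
  have hRset : {r | r ∈ C ∧ 0 < μ r} = (R : Set (Set (Fin d → ℝ))) := by
    ext r
    simp [hR]
  rw [hRset, finsum_mem_coe_finset, finsum_mem_eq_finite_toFinset_sum _ hfin]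
  set P := hfin.toFinset
  have hP : ∀ A ∈ P, A ∈ genPart C ∧ A ⊆ (⋃ r ∈ C, (r : Set (Fin d → ℝ))) ∧ 0 < μ A :=
    fun A hA => hfin.mem_toFinset.1 hA
  have hm0 : (0 : ℝ) < minRedund C := by exact_mod_cast hm
  rw [one_div_mul_eq_div, le_div_iff₀' hm0, Finset.mul_sum]
  calc _ ≤ ∑ A ∈ P, ∑ r ∈ R with A ⊆ r, ∫ x in A, (h x - condMeanOn μ h r) ^ 2 ∂μ :=
        Finset.sum_le_sum fun A hA =>
          minRedund_mul_le hmeas hbdd (hP A hA).1 (hP A hA).2.1 (hP A hA).2.2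
    _ = ∑ r ∈ R, ∑ A ∈ P with A ⊆ r, ∫ x in A, (h x - condMeanOn μ h r) ^ 2 ∂μ :=
        Finset.sum_comm' fun A r => by simp only [Finset.mem_filter]; tauto
    _ ≤ _ := Finset.sum_le_sum fun r _ =>
        sum_integral_cells_le hC_meas (fun A hA => (hP A hA).1)
          (integrable_sq_sub hmeas hbdd _) fun x => sq_nonneg _
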